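/- Define g*(y) = e^{4y} and h*(y) = (1/3) e^{4y} for y ∈ ℝ. For every κ > 0 there exists a unique global solution y* = y*_κ ∈ C¹([0,∞)) of the massless Einstein–Vlasov steady state equation y'(r) = −(1 − 2m*(r)/r)^{−1} (m*(r)/r² + 4π r σ*(r)), y(0) = κ, where ρ*(r) = g*(y(r)), σ*(r) = h*(y(r)), and m*(r) = 4π ∫₀^r s² ρ*(s) ds; in particular 2m*(r) < r holds for all r > 0. -/

import Mathlib

/-!
The steady state equation is singular at the centre, and its right-hand side blows up where
`2m = r`. In terms of the rescaled mean density `avg` (`m = 4π r³ avg`) the singularity at the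
centre disappears. Cutting `y` off at `κ` and `1 - 2m/r` at `1/500` gives a functional equation
`y(r) = κ + ∫₀^r rhs[y]` whose right-hand side is Lipschitz in `y` restricted to `[0,r]`, so
`volterra` (a contraction in a weighted sup norm) yields exactly one global solution.

The cut-offs are harmless. A solution decreases, so `y ≤ κ`. With `u = m/r` and `v = 4π r² e^{4y}`
the untruncated equation reads
`r u' = v - u`, `r v' = v (2 - 4 (u + v/3) / (1 - 2u))`,
and `v² ≤ 36 (1 - 2u)` is preserved; this forces `v < u`, hence `u' < 0`, when `u > 249/500`.
So `u ≤ 249/500` as long as `2m < r` (`mass_bound`). By continuity the solution of the truncated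
equation never reaches the cut-off and solves the original one (`trunc_mass_bound`); conversely
every solution of the original equation solves the truncated one, which gives uniqueness.
-/

open MeasureTheory Set Filter Topology
open scoped ENNReal

noncomputable section

/-- The massless mass function `m*(r) = 4π ∫₀^r s² e^{4y(s)} ds`
(with `ρ* = g*(y) = e^{4y}`). -/
def mStar (y : ℝ → ℝ) (r : ℝ) : ℝ :=
  4 * Real.pi * ∫ s in (0 : ℝ)..r, Real.exp (4 * y s) * s ^ 2

/-- `y` is a `C¹` global solution on `[0,∞)` of the massless Einstein–Vlasov steady
state equation `y' = −(1−2m*/r)⁻¹(m*/r² + 4πrσ*)` with `σ* = h*(y) = (1/3)e^{4y}`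
and `y(0) = κ`; in particular `2m*(r) < r` for `r > 0`. -/
def IsMasslessSteady (κ : ℝ) (y : ℝ → ℝ) : Prop :=
  ContDiffOn ℝ 1 y (Ici 0) ∧ y 0 = κ ∧
  ∀ r : ℝ, 0 < r → 2 * mStar y r < r ∧
    deriv y r = -(1 - 2 * mStar y r / r)⁻¹ *
      (mStar y r / r ^ 2 + 4 * Real.pi * r * (1 / 3 * Real.exp (4 * y r)))

/-! ### A Volterra fixed point theorem -/

/-- The weight that turns the Volterra operator of `volterra` into a contraction; its logarithmic
derivative is twice the Lipschitz rate `A (r + r³)`. -/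
def weight (A r : ℝ) : ℝ := Real.exp (A * (r ^ 2 + r ^ 4 / 2))

lemma weight_pos (A r : ℝ) : 0 < weight A r := Real.exp_pos _

lemma continuous_weight (A : ℝ) : Continuous (weight A) := by
  unfold weight; fun_prop

lemma weight_abs (A r : ℝ) : weight A |r| = weight A r := by
  have h4 : |r| ^ 4 = r ^ 4 := by
    rw [show |r| ^ 4 = (|r| ^ 2) ^ 2 by ring, sq_abs]; ring
  simp only [weight, sq_abs, h4]

lemma weight_mono {A s r : ℝ} (hA : 0 ≤ A) (hs : 0 ≤ s) (hsr : s ≤ r) :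
    weight A s ≤ weight A r := by
  unfold weight; gcongr

lemma sq_le_weight {A : ℝ} (hA : 1 ≤ A) (r : ℝ) : r ^ 2 ≤ weight A r := by
  have h := Real.add_one_le_exp (A * (r ^ 2 + r ^ 4 / 2))
  have h1 : r ^ 2 ≤ A * (r ^ 2 + r ^ 4 / 2) := by
    nlinarith [sq_nonneg r, sq_nonneg (r ^ 2), mul_nonneg (sub_nonneg.2 hA) (sq_nonneg r),
      mul_nonneg (zero_le_one.trans hA) (sq_nonneg (r ^ 2))]
  unfold weight; linarith

lemma integral_weight (A x : ℝ) :
    ∫ s in (0 : ℝ)..x, A * (s + s ^ 3) * weight A s = (weight A x - 1) / 2 := by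
  have hd : ∀ s ∈ uIcc 0 x, HasDerivAt (fun s => weight A s / 2)
      (A * (s + s ^ 3) * weight A s) s := by
    intro s _
    have h := ((((hasDerivAt_pow 2 s).add ((hasDerivAt_pow 4 s).div_const 2)).const_mul
      A).exp).div_const 2
    refine HasDerivAt.congr_deriv (f := fun s => weight A s / 2) h ?_
    simp [weight]
    ring
  rw [intervalIntegral.integral_eq_sub_of_hasDerivAt hd]
  · simp [weight]; ring
  · apply Continuous.intervalIntegrable
    have := continuous_weight A
    fun_prop

/-- Global existence and uniqueness for `y(r) = κ + ∫₀^r F[y]` on `[0,∞)`, where `F[y](r)` depends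
in a Lipschitz way on `y` restricted to `[0,r]`. In the variable `f = (y - κ) / weight` the
integral operator is a contraction of bounded continuous functions with constant `1/2`. Since the
functions live on all of `ℝ`, the half-line is extended evenly by means of `|r|`. -/
theorem volterra (F : (ℝ → ℝ) → ℝ → ℝ) (A B κ : ℝ) (hA : 1 ≤ A) (hB : 0 ≤ B)
    (hcont : ∀ y, Continuous y → Continuous (F y))
    (hbd : ∀ y, Continuous y → ∀ r, 0 ≤ r → |F y r| ≤ B * r)
    (hL : ∀ y z, Continuous y → Continuous z → ∀ r M, 0 ≤ r →
      (∀ s ∈ Icc 0 r, |y s - z s| ≤ M) → |F y r - F z r| ≤ A * (r + r ^ 3) * M) :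
    ∃ y, Continuous y ∧ (∀ r, 0 ≤ r → y r = κ + ∫ s in (0 : ℝ)..r, F y s) ∧
      ∀ z, Continuous z → (∀ r, z r = κ + ∫ s in (0 : ℝ)..|r|, F z s) → z = y := by
  have hA0 : (0 : ℝ) ≤ A := zero_le_one.trans hA
  have hS : ∀ y : ℝ → ℝ, Continuous y → ∃ S : BoundedContinuousFunction ℝ ℝ,
      ∀ r, S r = (∫ s in (0 : ℝ)..|r|, F y s) / weight A r := by
    intro y hy
    have hFi : ∀ a b, IntervalIntegrable (F y) volume a b :=
      fun a b => (hcont y hy).intervalIntegrable a b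
    refine ⟨BoundedContinuousFunction.ofNormedAddCommGroup
      (fun r => (∫ s in (0 : ℝ)..|r|, F y s) / weight A r) ?_ B ?_, fun r => rfl⟩
    · exact ((intervalIntegral.continuous_primitive hFi 0).comp continuous_abs).div
        (continuous_weight A) fun r => (weight_pos A r).ne'
    · intro r
      have h1 : ‖∫ s in (0 : ℝ)..|r|, F y s‖ ≤ (B * |r|) * |(|r|) - 0| := by
        apply intervalIntegral.norm_integral_le_of_norm_le_const
        intro s hs
        rw [uIoc_of_le (abs_nonneg r)] at hs
        exact (hbd y hy s hs.1.le).trans (mul_le_mul_of_nonneg_left hs.2 hB)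
      have h2 : (B * |r|) * |(|r|) - 0| = B * r ^ 2 := by
        rw [sub_zero, abs_abs, mul_assoc, ← sq, sq_abs]
      rw [h2] at h1
      rw [norm_div, Real.norm_of_nonneg (weight_pos A r).le, div_le_iff₀ (weight_pos A r)]
      exact h1.trans (mul_le_mul_of_nonneg_left (sq_le_weight hA r) hB)
  choose S hSe using hS
  have hc : ∀ f : BoundedContinuousFunction ℝ ℝ,
      Continuous (fun r => κ + weight A r * f r) := fun f =>
    continuous_const.add ((continuous_weight A).mul f.continuous)
  obtain ⟨T, hTe⟩ : ∃ T : BoundedContinuousFunction ℝ ℝ → BoundedContinuousFunction ℝ ℝ,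
      ∀ f r, T f r = (∫ s in (0 : ℝ)..|r|, F (fun r => κ + weight A r * f r) s) / weight A r :=
    ⟨fun f => S _ (hc f), fun f r => hSe _ _ r⟩
  have hT : ContractingWith (1 / 2) T := by
    refine ⟨by rw [← NNReal.coe_lt_coe]; norm_num, LipschitzWith.of_dist_le_mul fun f g => ?_⟩
    rw [BoundedContinuousFunction.dist_le (by positivity)]
    -- `|T f - T g| ≤ weight⁻¹ ∫₀^r A (s + s³) weight d ds ≤ d / 2`, by `integral_weight`.
    intro r
    set d := dist f g with hd
    have hd0 : 0 ≤ d := dist_nonneg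
    have hFf := hcont _ (hc f)
    have hFg := hcont _ (hc g)
    have key : |∫ s in (0 : ℝ)..|r|, (F (fun r => κ + weight A r * f r) s
        - F (fun r => κ + weight A r * g r) s)| ≤
        ∫ s in (0 : ℝ)..|r|, A * (s + s ^ 3) * weight A s * d := by
      rw [← Real.norm_eq_abs]
      apply intervalIntegral.norm_integral_le_of_norm_le (abs_nonneg r)
      · refine ae_of_all _ fun s hs => ?_
        rw [mul_assoc]
        apply hL _ _ (hc f) (hc g) s _ hs.1.le
        intro t ht
        have h1 : |f t - g t| ≤ d := by
          rw [← Real.dist_eq]; exact BoundedContinuousFunction.dist_coe_le_dist t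
        have h2 := weight_mono hA0 ht.1 ht.2
        rw [add_sub_add_left_eq_sub, ← mul_sub, abs_mul, abs_of_pos (weight_pos A t)]
        exact mul_le_mul h2 h1 (abs_nonneg _) (weight_pos A s).le
      · apply Continuous.intervalIntegrable
        have := continuous_weight A
        fun_prop
    rw [intervalIntegral.integral_mul_const, integral_weight, weight_abs,
      intervalIntegral.integral_sub (hFf.intervalIntegrable _ _)
        (hFg.intervalIntegrable _ _)] at key
    have hw := weight_pos A r
    rw [hTe, hTe, Real.dist_eq]
    rw [← sub_div, abs_div, abs_of_pos hw, div_le_iff₀ hw]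
    refine key.trans ?_
    push_cast
    nlinarith
  obtain ⟨f, hfix, hfu⟩ : ∃ f, T f = f ∧ ∀ g, T g = g → g = f :=
    ⟨_, hT.fixedPoint_isFixedPt, fun g hg => hT.fixedPoint_unique hg⟩
  refine ⟨fun r => κ + weight A r * f r, hc f, ?_, ?_⟩
  · intro r hr
    have h : f r = (∫ s in (0 : ℝ)..|r|, F (fun r => κ + weight A r * f r) s) / weight A r := by
      rw [← hTe, hfix]
    have hw := (weight_pos A r).ne'
    rw [abs_of_nonneg hr, eq_div_iff hw] at h
    rw [← h, mul_comm]
  · intro z hz hze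
    have h1 : (fun r => κ + weight A r * S z hz r) = z := by
      funext r
      have hw := (weight_pos A r).ne'
      rw [hSe, mul_div_cancel₀ _ hw, ← hze r]
    have h2 : T (S z hz) = S z hz := by
      ext r
      rw [hTe, hSe, h1]
    rw [← hfu _ h2]
    exact h1.symm

/-! ### The mean density and the truncated equation -/

/-- The rescaled mean density `∫₀¹ t² E(tr) dt = r⁻³ ∫₀^r s² E(s) ds`. In this form it is
manifestly continuous at the centre `r = 0`. -/
def avg (E : ℝ → ℝ) (r : ℝ) : ℝ := ∫ t in (0 : ℝ)..1, t ^ 2 * E (t * r)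

lemma continuous_avg {E : ℝ → ℝ} (hE : Continuous E) : Continuous (avg E) := by
  unfold avg
  apply intervalIntegral.continuous_parametric_intervalIntegral_of_continuous'
  fun_prop

lemma cube_mul_avg (E : ℝ → ℝ) (r : ℝ) :
    r ^ 3 * avg E r = ∫ s in (0 : ℝ)..r, E s * s ^ 2 := by
  have h := intervalIntegral.mul_integral_comp_mul_right (a := 0) (b := 1)
    (f := fun s => E s * s ^ 2) r
  simp only [zero_mul, one_mul] at h
  rw [← h, avg, show r ^ 3 = r * r ^ 2 by ring, mul_assoc,
    ← intervalIntegral.integral_const_mul]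
  congr 1
  apply intervalIntegral.integral_congr
  intro t _
  ring

lemma mStar_eq (y : ℝ → ℝ) (r : ℝ) :
    mStar y r = 4 * Real.pi * (r ^ 3 * avg (fun s => Real.exp (4 * y s)) r) := by
  rw [cube_mul_avg]; rfl

lemma mul_mem_Icc {t r : ℝ} (hr : 0 ≤ r) (ht : t ∈ Icc (0 : ℝ) 1) : t * r ∈ Icc 0 r :=
  ⟨mul_nonneg ht.1 hr, mul_le_of_le_one_left hr ht.2⟩

lemma abs_avg_sub_le {E G : ℝ → ℝ} (hE : Continuous E) (hG : Continuous G) {r M : ℝ}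
    (hr : 0 ≤ r) (h : ∀ s ∈ Icc 0 r, |E s - G s| ≤ M) : |avg E r - avg G r| ≤ M := by
  unfold avg
  rw [← intervalIntegral.integral_sub (Continuous.intervalIntegrable (by fun_prop) _ _)
    (Continuous.intervalIntegrable (by fun_prop) _ _), ← Real.norm_eq_abs]
  have := intervalIntegral.norm_integral_le_of_norm_le_const (a := 0) (b := 1) (C := M)
    (f := fun t => t ^ 2 * E (t * r) - t ^ 2 * G (t * r)) ?_
  · simpa using this
  · intro t ht
    rw [uIoc_of_le zero_le_one] at ht
    have h1 := h (t * r) (mul_mem_Icc hr ⟨ht.1.le, ht.2⟩)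
    rw [← mul_sub, norm_mul, Real.norm_eq_abs, Real.norm_eq_abs, abs_of_nonneg (sq_nonneg t)]
    have h2 : t ^ 2 ≤ 1 := pow_le_one₀ ht.1.le ht.2
    exact (mul_le_of_le_one_left (abs_nonneg _) h2).trans h1

lemma avg_nonneg {E : ℝ → ℝ} (hE : ∀ s, 0 ≤ E s) (r : ℝ) : 0 ≤ avg E r :=
  intervalIntegral.integral_nonneg zero_le_one fun t _ => mul_nonneg (sq_nonneg t) (hE _)

lemma avg_congr {E G : ℝ → ℝ} {r : ℝ} (hr : 0 ≤ r) (h : ∀ s ∈ Icc 0 r, E s = G s) :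
    avg E r = avg G r := by
  apply intervalIntegral.integral_congr
  intro t ht
  rw [uIcc_of_le zero_le_one] at ht
  simp only [h _ (mul_mem_Icc hr ht)]

/-- The density `e^{4y}` with `y` cut off from above at the central value `κ`. -/
def truncE (κ : ℝ) (y : ℝ → ℝ) (s : ℝ) : ℝ := Real.exp (4 * min (y s) κ)

/-- Right-hand side of the steady state equation with density `truncE` and with `1 - 2m/r` bounded
below by `1/500`; written through `avg`, using `m = 4π r³ avg`. -/
def rhs (κ : ℝ) (y : ℝ → ℝ) (r : ℝ) : ℝ :=
  -(4 * Real.pi * r * ((avg (truncE κ y) r + truncE κ y r / 3) /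
    max (1 - 8 * Real.pi * r ^ 2 * avg (truncE κ y) r) (1 / 500)))

lemma continuous_truncE {κ : ℝ} {y : ℝ → ℝ} (hy : Continuous y) : Continuous (truncE κ y) := by
  unfold truncE; fun_prop

lemma continuous_rhs {κ : ℝ} {y : ℝ → ℝ} (hy : Continuous y) : Continuous (rhs κ y) := by
  have h1 := continuous_truncE (κ := κ) hy
  have h2 := continuous_avg h1
  unfold rhs
  refine (Continuous.mul (by fun_prop) (Continuous.div (by fun_prop) (by fun_prop) ?_)).neg
  intro r
  exact (lt_of_lt_of_le (by norm_num) (le_max_right _ _)).ne'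

lemma truncE_pos (κ : ℝ) (y : ℝ → ℝ) (s : ℝ) : 0 < truncE κ y s := Real.exp_pos _

lemma truncE_le (κ : ℝ) (y : ℝ → ℝ) (s : ℝ) : truncE κ y s ≤ Real.exp (4 * κ) := by
  unfold truncE; gcongr; exact min_le_right _ _

lemma exp_sub_le {a b c : ℝ} (ha : a ≤ c) :
    Real.exp a - Real.exp b ≤ Real.exp c * |a - b| := by
  have h1 := Real.add_one_le_exp (b - a)
  have h2 : Real.exp b = Real.exp a * Real.exp (b - a) := by rw [← Real.exp_add]; ring_nf
  have h3 : Real.exp a ≤ Real.exp c := Real.exp_le_exp.2 ha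
  have h4 := le_abs_self (a - b)
  have h5 := abs_nonneg (a - b)
  have h6 := Real.exp_pos a
  calc Real.exp a - Real.exp b = Real.exp a * (1 - Real.exp (b - a)) := by rw [h2]; ring
    _ ≤ Real.exp a * |a - b| := by gcongr; linarith
    _ ≤ _ := by gcongr

lemma abs_truncE_sub_le (κ : ℝ) (y z : ℝ → ℝ) (s : ℝ) :
    |truncE κ y s - truncE κ z s| ≤ 4 * Real.exp (4 * κ) * |y s - z s| := by
  have hm : |min (y s) κ - min (z s) κ| ≤ |y s - z s| := by
    simpa using abs_min_sub_min_le_max (y s) κ (z s) κ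
  have hm' : |4 * min (y s) κ - 4 * min (z s) κ| ≤ 4 * |y s - z s| := by
    rw [← mul_sub, abs_mul, abs_of_pos (by norm_num : (0 : ℝ) < 4)]; linarith
  have hE := Real.exp_pos (4 * κ)
  have h1 := exp_sub_le (a := 4 * min (y s) κ) (b := 4 * min (z s) κ) (c := 4 * κ)
    (by linarith [min_le_right (y s) κ])
  have h2 := exp_sub_le (a := 4 * min (z s) κ) (b := 4 * min (y s) κ) (c := 4 * κ)
    (by linarith [min_le_right (z s) κ])
  rw [abs_sub_comm (4 * min (z s) κ)] at h2
  have h3 := mul_le_mul_of_nonneg_left hm' hE.le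
  unfold truncE
  rw [abs_le]
  constructor <;> linarith

lemma avg_truncE_le {κ : ℝ} {y : ℝ → ℝ} (hy : Continuous y) {r : ℝ} (hr : 0 ≤ r) :
    avg (truncE κ y) r ≤ Real.exp (4 * κ) := by
  have h := abs_avg_sub_le (continuous_truncE (κ := κ) hy) (continuous_const (y := (0 : ℝ))) hr
    (M := Real.exp (4 * κ)) (fun s _ => by
      rw [sub_zero, abs_of_pos (truncE_pos κ y s)]; exact truncE_le κ y s)
  have h0 : avg (fun _ => (0 : ℝ)) r = 0 := by simp [avg]
  rw [h0, sub_zero] at h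
  exact (le_abs_self _).trans h

lemma abs_rhs_le {κ : ℝ} {y : ℝ → ℝ} (hy : Continuous y) {r : ℝ} (hr : 0 ≤ r) :
    |rhs κ y r| ≤ 4000 * Real.pi * Real.exp (4 * κ) * r := by
  have hw := avg_truncE_le (κ := κ) hy hr
  have hw0 := avg_nonneg (fun s => (truncE_pos κ y s).le) r
  have hE := truncE_le κ y r
  have hE0 := truncE_pos κ y r
  have hD : (1 / 500 : ℝ) ≤ max (1 - 8 * Real.pi * r ^ 2 * avg (truncE κ y) r) (1 / 500) :=
    le_max_right _ _
  have hpi := Real.pi_pos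
  have hq : (avg (truncE κ y) r + truncE κ y r / 3) /
      max (1 - 8 * Real.pi * r ^ 2 * avg (truncE κ y) r) (1 / 500) ≤
      1000 * Real.exp (4 * κ) := by
    rw [div_le_iff₀ (by linarith)]
    nlinarith [Real.exp_pos (4 * κ)]
  have hq0 : 0 ≤ (avg (truncE κ y) r + truncE κ y r / 3) /
      max (1 - 8 * Real.pi * r ^ 2 * avg (truncE κ y) r) (1 / 500) := by positivity
  unfold rhs
  rw [abs_neg, abs_of_nonneg (by positivity)]
  calc _ ≤ 4 * Real.pi * r * (1000 * Real.exp (4 * κ)) := by gcongr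
    _ = _ := by ring

lemma abs_div_sub_div_le {N₁ N₂ D₁ D₂ n d N : ℝ} (h₁ : 1 / 500 ≤ D₁) (h₂ : 1 / 500 ≤ D₂)
    (hn : |N₁ - N₂| ≤ n) (hd : |D₁ - D₂| ≤ d) (hN : |N₂| ≤ N) :
    |N₁ / D₁ - N₂ / D₂| ≤ 500 * n + 250000 * (N * d) := by
  have hD1 : 0 < D₁ := by linarith
  have hD2 : 0 < D₂ := by linarith
  have e : N₁ / D₁ - N₂ / D₂ = (N₁ - N₂) * D₁⁻¹ + N₂ * (D₂ - D₁) * (D₁⁻¹ * D₂⁻¹) := by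
    field_simp; ring
  have i1 : D₁⁻¹ ≤ 500 := by rw [inv_le_comm₀ hD1 (by norm_num)]; linarith
  have i2 : D₂⁻¹ ≤ 500 := by rw [inv_le_comm₀ hD2 (by norm_num)]; linarith
  have p1 := inv_pos.2 hD1
  have p2 := inv_pos.2 hD2
  have hN0 := (abs_nonneg _).trans hN
  have hd0 := (abs_nonneg _).trans hd
  have hn0 := (abs_nonneg _).trans hn
  rw [e]
  refine (abs_add_le _ _).trans ?_
  rw [abs_mul, abs_mul, abs_mul, abs_mul, abs_of_pos p1, abs_of_pos p2, abs_sub_comm D₂]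
  have a1 : |N₁ - N₂| * D₁⁻¹ ≤ n * 500 := by gcongr
  have a2 : |N₂| * |D₁ - D₂| * (D₁⁻¹ * D₂⁻¹) ≤ N * d * (500 * 500) := by gcongr
  linarith

/-- The Lipschitz estimate needed by `volterra`. Both cut-offs enter: the density is Lipschitz
because `y` is cut off at `κ`, and the quotient because its denominator is at least `1/500`. -/
lemma abs_rhs_sub_le (κ : ℝ) : ∃ A : ℝ, 1 ≤ A ∧ ∀ y z, Continuous y → Continuous z →
    ∀ r M, 0 ≤ r → (∀ s ∈ Icc 0 r, |y s - z s| ≤ M) →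
      |rhs κ y r - rhs κ z r| ≤ A * (r + r ^ 3) * M := by
  set e := Real.exp (4 * κ) with he
  have he0 : 0 < e := Real.exp_pos _
  have hpi := Real.pi_pos
  set a := 500 * (8 * e) with ha
  set b := 250000 * (2 * e * (8 * Real.pi * (4 * e))) with hb
  have ha0 : 0 < a := by positivity
  have hb0 : 0 < b := by positivity
  refine ⟨1 + 4 * Real.pi * (a + b), by nlinarith [mul_pos hpi (add_pos ha0 hb0)], ?_⟩
  intro y z hy hz r M hr hM
  have hM0 : 0 ≤ M := (abs_nonneg _).trans (hM 0 ⟨le_rfl, hr⟩)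
  have hE : ∀ s ∈ Icc 0 r, |truncE κ y s - truncE κ z s| ≤ 4 * e * M := fun s hs =>
    (abs_truncE_sub_le κ y z s).trans (mul_le_mul_of_nonneg_left (hM s hs) (by positivity))
  have hw := abs_avg_sub_le (continuous_truncE (κ := κ) hy) (continuous_truncE (κ := κ) hz) hr hE
  have hEr := hE r ⟨hr, le_rfl⟩
  have hN : |(avg (truncE κ y) r + truncE κ y r / 3) - (avg (truncE κ z) r + truncE κ z r / 3)|
      ≤ 8 * e * M := by
    rw [abs_le] at hw hEr ⊢
    have : 0 ≤ e * M := by positivity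
    constructor <;> linarith [hw.1, hw.2, hEr.1, hEr.2]
  have hD : |max (1 - 8 * Real.pi * r ^ 2 * avg (truncE κ y) r) (1 / 500) -
      max (1 - 8 * Real.pi * r ^ 2 * avg (truncE κ z) r) (1 / 500)| ≤
      8 * Real.pi * r ^ 2 * (4 * e * M) := by
    refine (abs_max_sub_max_le_abs _ _ _).trans ?_
    rw [sub_sub_sub_cancel_left, ← mul_sub, abs_mul, abs_of_nonneg (by positivity), abs_sub_comm]
    gcongr
  have hN2 : |avg (truncE κ z) r + truncE κ z r / 3| ≤ 2 * e := by
    have h1 := avg_truncE_le (κ := κ) hz hr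
    have h2 := avg_nonneg (fun s => (truncE_pos κ z s).le) r
    have h3 := truncE_le κ z r
    have h4 := truncE_pos κ z r
    rw [abs_of_nonneg (by positivity)]
    linarith
  have hq := abs_div_sub_div_le (le_max_right _ _) (le_max_right _ _) hN hD hN2
  unfold rhs
  rw [neg_sub_neg, abs_sub_comm, ← mul_sub, abs_mul, abs_of_nonneg (by positivity)]
  calc _ ≤ 4 * Real.pi * r * (500 * (8 * e * M) +
        250000 * (2 * e * (8 * Real.pi * r ^ 2 * (4 * e * M)))) := by gcongr
    _ = 4 * Real.pi * (a * r + b * r ^ 3) * M := by rw [ha, hb]; ring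
    _ ≤ _ := by
      refine mul_le_mul_of_nonneg_right ?_ hM0
      have h3 : 0 ≤ r ^ 3 := by positivity
      have p1 : 0 ≤ Real.pi * a * r ^ 3 := by positivity
      have p2 : 0 ≤ Real.pi * b * r := by positivity
      nlinarith

/-! ### The bound on `2m/r` -/

/-- A function that starts nonpositive and does not increase where it is positive stays
nonpositive. -/
lemma barrier {f : ℝ → ℝ} {R : ℝ} (hf : ContinuousOn f (Icc 0 R)) (h0 : f 0 ≤ 0)
    (hd : ∀ r ∈ Ioc 0 R, 0 < f r → ∃ f', HasDerivAt f f' r ∧ f' ≤ 0) :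
    ∀ r ∈ Icc 0 R, f r ≤ 0 := by
  intro r hr
  by_contra! hpos
  have hf1 : ContinuousOn f (Icc 0 r) := hf.mono (Icc_subset_Icc_right hr.2)
  have hK : IsCompact (Icc 0 r ∩ f ⁻¹' Iic 0) :=
    isCompact_Icc.of_isClosed_subset (hf1.preimage_isClosed_of_isClosed isClosed_Icc isClosed_Iic)
      inter_subset_left
  obtain ⟨s, ⟨hs, hfs⟩, hmax⟩ := hK.exists_isGreatest ⟨0, ⟨le_rfl, hr.1⟩, h0⟩
  have hgt : ∀ t ∈ Ioc s r, 0 < f t := by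
    intro t ht
    by_contra! h
    exact absurd (hmax ⟨⟨hs.1.trans ht.1.le, ht.2⟩, h⟩) (not_le.2 ht.1)
  have hD : ∀ t ∈ Ioo s r, ∃ f', HasDerivAt f f' t ∧ f' ≤ 0 := fun t ht =>
    hd t ⟨hs.1.trans_lt ht.1, ht.2.le.trans hr.2⟩ (hgt t ⟨ht.1, ht.2.le⟩)
  have hanti : AntitoneOn f (Icc s r) := by
    apply antitoneOn_of_deriv_nonpos (convex_Icc s r) (hf1.mono (Icc_subset_Icc_left hs.1))
    · rw [interior_Icc]
      intro t ht
      obtain ⟨f', h, _⟩ := hD t ht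
      exact h.differentiableAt.differentiableWithinAt
    · rw [interior_Icc]
      intro t ht
      obtain ⟨f', h, h'⟩ := hD t ht
      rwa [h.deriv]
  have := hanti (left_mem_Icc.2 hs.2) (right_mem_Icc.2 hs.2) hs.2
  have hfs' : f s ≤ 0 := hfs
  linarith

lemma hasDerivAt_mStar {y : ℝ → ℝ} (hy : Continuous y) (r : ℝ) :
    HasDerivAt (mStar y) (4 * Real.pi * (Real.exp (4 * y r) * r ^ 2)) r := by
  have hc : Continuous fun s => Real.exp (4 * y s) * s ^ 2 := by fun_prop
  exact (hc.integral_hasStrictDerivAt 0 r).hasDerivAt.const_mul _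

lemma mStar_nonneg (y : ℝ → ℝ) {r : ℝ} (hr : 0 ≤ r) : 0 ≤ mStar y r := by
  rw [mStar_eq]
  have := avg_nonneg (E := fun s => Real.exp (4 * y s)) (fun s => (Real.exp_pos _).le) r
  have := Real.pi_pos
  positivity

lemma mStar_div (y : ℝ → ℝ) (r : ℝ) :
    mStar y r / r = 4 * Real.pi * r ^ 2 * avg (fun s => Real.exp (4 * y s)) r := by
  rw [mStar_eq]
  rcases eq_or_ne r 0 with rfl | h
  · simp
  · field_simp

/-- The mass ratio `m/r` extends continuously by `0` to the centre; the convention `0 / 0 = 0` gives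
the right value there. -/
lemma continuous_mStar_div {y : ℝ → ℝ} (hy : Continuous y) :
    Continuous fun r => mStar y r / r := by
  have h : Continuous (avg fun s => Real.exp (4 * y s)) := continuous_avg (by fun_prop)
  simp only [mStar_div]
  fun_prop

/-- With `u = m/r` and `v = 4π r² e^{4y}`, this is `r (1 - 2u)` times the derivative of
`v² - 36 (1 - 2u)`, which is nonpositive where that function is positive. -/
lemma barrier_ineq {u v : ℝ} (hu : 0 ≤ u) (hX : 0 < 1 - 2 * u) (hv : 0 < v)
    (h : 0 < v ^ 2 - 36 * (1 - 2 * u)) :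
    2 * v ^ 2 * (2 - 8 * u - 4 / 3 * v) + 72 * (1 - 2 * u) * (v - u) ≤ 0 := by
  have h6 : 6 * (1 - 2 * u) < v := by
    by_contra! hle
    nlinarith
  rcases le_total u v with huv | huv
  · have h1 : 72 * (1 - 2 * u) * (v - u) ≤ 2 * v ^ 2 * (v - u) :=
      mul_le_mul_of_nonneg_right (by linarith) (by linarith)
    have h2 : 2 * v ^ 2 * (2 - 9 * u - v / 3) ≤ 0 :=
      mul_nonpos_of_nonneg_of_nonpos (by positivity) (by linarith)
    nlinarith
  · have h1 : 72 * (1 - 2 * u) * (v - u) ≤ 0 :=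
      mul_nonpos_of_nonneg_of_nonpos (by linarith) (by linarith)
    have h2 : 2 * v ^ 2 * (2 - 8 * u - 4 / 3 * v) ≤ 0 :=
      mul_nonpos_of_nonneg_of_nonpos (by positivity) (by linarith)
    linarith

/-- Buchdahl-type a priori bound: as long as a solution satisfies `2m < r`, it satisfies
`m/r ≤ 249/500`. Two barriers are used: `v² ≤ 36 (1 - 2u)`, and then `u ≤ 249/500`, because the
first one forces `v < u` above that value. -/
theorem mass_bound {y : ℝ → ℝ} {R : ℝ} (hy : Continuous y)
    (h : ∀ r ∈ Ioc 0 R, 2 * mStar y r < r ∧ HasDerivAt y (-(1 - 2 * mStar y r / r)⁻¹ *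
      (mStar y r / r ^ 2 + 4 * Real.pi * r * (1 / 3 * Real.exp (4 * y r)))) r) :
    ∀ r ∈ Icc 0 R, mStar y r / r ≤ 249 / 500 := by
  have hpi := Real.pi_pos
  have hcu := continuous_mStar_div hy
  have hdu : ∀ r, 0 < r → HasDerivAt (fun r => mStar y r / r)
      ((4 * Real.pi * r ^ 2 * Real.exp (4 * y r) - mStar y r / r) / r) r := by
    intro r hr
    refine HasDerivAt.congr_deriv ((hasDerivAt_mStar hy r).div (hasDerivAt_id r) hr.ne') ?_
    field_simp
  have hX : ∀ r ∈ Ioc 0 R, 0 < 1 - 2 * (mStar y r / r) := by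
    intro r hr
    have := (h r hr).1
    have : 2 * (mStar y r / r) < 1 := by rw [← mul_div_assoc, div_lt_one hr.1]; exact this
    linarith
  have hu0 : ∀ r, 0 < r → 0 ≤ mStar y r / r := fun r hr =>
    div_nonneg (mStar_nonneg y hr.le) hr.le
  have hQ : ∀ r ∈ Icc 0 R, (4 * Real.pi * r ^ 2 * Real.exp (4 * y r)) ^ 2 -
      36 * (1 - 2 * (mStar y r / r)) ≤ 0 := by
    apply barrier
    · exact Continuous.continuousOn (by fun_prop)
    · simp
    · intro r hr hpos
      have hr0 := hr.1
      have hv : 0 < 4 * Real.pi * r ^ 2 * Real.exp (4 * y r) := by positivity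
      have hineq := barrier_ineq (hu0 r hr0) (hX r hr) hv hpos
      have hXr := hX r hr
      have hdv := (((hasDerivAt_pow 2 r).const_mul (4 * Real.pi)).mul
        (((h r hr).2.const_mul 4).exp)).pow 2
      have hd := hdv.sub ((((hdu r hr0).const_mul 2).const_sub 1).const_mul 36)
      refine ⟨_, hd, ?_⟩
      have hm : mStar y r / r ^ 2 = mStar y r / r / r := by field_simp
      rw [mul_div_assoc, hm]
      simp only [Pi.mul_apply]
      generalize mStar y r / r = u at *
      generalize Real.exp (4 * y r) = E at *
      set v := 4 * Real.pi * r ^ 2 * E with hvdef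
      have key : ∀ x, x = (2 * v ^ 2 * (2 - 8 * u - 4 / 3 * v) +
          72 * (1 - 2 * u) * (v - u)) / (r * (1 - 2 * u)) → x ≤ 0 := by
        rintro x rfl
        exact div_nonpos_of_nonpos_of_nonneg hineq (by positivity)
      apply key
      have hX' := hXr.ne'
      rw [hvdef]
      field_simp
      push_cast
      ring
  have hb := barrier (f := fun r => mStar y r / r - 249 / 500) (R := R)
    (Continuous.continuousOn (by fun_prop)) (by norm_num) ?_
  · intro r hr
    have := hb r hr
    linarith
  · intro r hr hpos
    refine ⟨_, (hdu r hr.1).sub_const _, ?_⟩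
    apply div_nonpos_of_nonpos_of_nonneg _ hr.1.le
    have := hQ r ⟨hr.1.le, hr.2⟩
    nlinarith

/-! ### Passing between the two equations -/

lemma truncE_eq {κ : ℝ} {y : ℝ → ℝ} {s : ℝ} (h : y s ≤ κ) :
    truncE κ y s = Real.exp (4 * y s) := by
  rw [truncE, min_eq_left h]

/-- Where `y ≤ κ` and `m/r ≤ 499/1000`, neither cut-off is active. -/
lemma rhs_eq {κ : ℝ} {y : ℝ → ℝ} (hle : ∀ s, 0 ≤ s → y s ≤ κ) {r : ℝ} (hr : 0 < r)
    (hu : mStar y r / r ≤ 499 / 1000) :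
    rhs κ y r = -(1 - 2 * mStar y r / r)⁻¹ *
      (mStar y r / r ^ 2 + 4 * Real.pi * r * (1 / 3 * Real.exp (4 * y r))) := by
  have ha : avg (truncE κ y) r = avg (fun s => Real.exp (4 * y s)) r :=
    avg_congr hr.le fun s hs => truncE_eq (hle s hs.1)
  have hm : mStar y r / r ^ 2 = 4 * Real.pi * r * avg (fun s => Real.exp (4 * y s)) r := by
    rw [mStar_eq]; field_simp
  rw [mStar_div] at hu
  unfold rhs
  rw [ha, truncE_eq (hle r hr.le), hm, mul_div_assoc, mStar_div, max_eq_left (by linarith),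
    div_eq_mul_inv]
  have e : 2 * (4 * Real.pi * r ^ 2 * avg (fun s => Real.exp (4 * y s)) r) =
    8 * Real.pi * r ^ 2 * avg (fun s => Real.exp (4 * y s)) r := by ring
  rw [e]
  ring

lemma rhs_nonpos (κ : ℝ) (y : ℝ → ℝ) {r : ℝ} (hr : 0 ≤ r) : rhs κ y r ≤ 0 := by
  have h1 := avg_nonneg (fun s => (truncE_pos κ y s).le) r
  have h2 := truncE_pos κ y r
  have hD : (0 : ℝ) ≤ max (1 - 8 * Real.pi * r ^ 2 * avg (truncE κ y) r) (1 / 500) :=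
    le_trans (by norm_num) (le_max_right _ _)
  have := Real.pi_pos
  unfold rhs
  rw [neg_nonpos]
  positivity

lemma le_of_deriv_nonpos {y : ℝ → ℝ} {κ : ℝ} (hy : Continuous y) (h0 : y 0 = κ)
    (hd : ∀ r, 0 < r → ∃ y', HasDerivAt y y' r ∧ y' ≤ 0) : ∀ r, 0 ≤ r → y r ≤ κ := by
  intro r hr
  have := barrier (f := fun r => y r - κ) (R := r)
    (Continuous.continuousOn (by fun_prop)) (by simp [h0]) (fun s hs _ => by
      obtain ⟨y', h, h'⟩ := hd s hs.1
      exact ⟨y', h.sub_const κ, h'⟩) r ⟨hr, le_rfl⟩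
  linarith

/-- A solution of the truncated equation never reaches the cut-off: at the first radius with
`m/r = 499/1000` it would solve the original equation up to there, against `mass_bound`. -/
lemma trunc_mass_bound {κ : ℝ} {y : ℝ → ℝ} (hy : Continuous y) (hle : ∀ s, 0 ≤ s → y s ≤ κ)
    (hd : ∀ r, 0 < r → HasDerivAt y (rhs κ y r) r) {r : ℝ} (hr : 0 ≤ r) :
    mStar y r / r ≤ 499 / 1000 := by
  by_contra! hgt
  have hcu := continuous_mStar_div hy
  have hK : IsCompact (Icc 0 r ∩ (fun r => mStar y r / r) ⁻¹' Ici (499 / 1000)) :=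
    isCompact_Icc.inter_right (isClosed_Ici.preimage hcu)
  obtain ⟨R, ⟨hR, hRu⟩, hmin⟩ := hK.exists_isLeast ⟨r, ⟨hr, le_rfl⟩, hgt.le⟩
  have hRu' : 499 / 1000 ≤ mStar y R / R := hRu
  have hlt : ∀ s, 0 ≤ s → s < R → mStar y s / s < 499 / 1000 := by
    intro s hs hsR
    by_contra! hcon
    exact absurd (hmin ⟨⟨hs, hsR.le.trans hR.2⟩, hcon⟩) (not_le.2 hsR)
  have hR0 : 0 < R := by
    rcases hR.1.eq_or_lt with h | h
    · rw [← h] at hRu'; norm_num at hRu'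
    · exact h
  have hRle : mStar y R / R ≤ 499 / 1000 := by
    refine le_of_tendsto (hcu.continuousWithinAt (s := Iio R) (x := R)).tendsto ?_
    filter_upwards [Ioo_mem_nhdsLT hR0] with s hs
    exact (hlt s hs.1.le hs.2).le
  have hall : ∀ s ∈ Ioc 0 R, mStar y s / s ≤ 499 / 1000 := by
    intro s hs
    rcases hs.2.eq_or_lt with h | h
    · rw [h]; exact hRle
    · exact (hlt s hs.1.le h).le
  have hb := mass_bound (R := R) hy (fun s hs => by
    have h1 := hall s hs
    refine ⟨?_, rhs_eq hle hs.1 h1 ▸ hd s hs.1⟩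
    rw [div_le_iff₀ hs.1] at h1
    linarith [hs.1]) R ⟨hR0.le, le_rfl⟩
  linarith

/-- **Existence and uniqueness of the massless Einstein–Vlasov steady states**
(with the radiative equation of state `σ = ρ/3`), for every central value `κ > 0`. -/
theorem stmt_14 (κ : ℝ) (hκ : 0 < κ) :
    ∃ y : ℝ → ℝ, IsMasslessSteady κ y ∧
      ∀ y' : ℝ → ℝ, IsMasslessSteady κ y' → Set.EqOn y y' (Ici 0) := by
  obtain ⟨A, hA, hLip⟩ := abs_rhs_sub_le κ
  obtain ⟨y, hy, hint, huniq⟩ := volterra (rhs κ) A (4000 * Real.pi * Real.exp (4 * κ)) κ hA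
    (by have := Real.pi_pos; positivity) (fun y hy => continuous_rhs hy)
    (fun y hy r hr => abs_rhs_le hy hr) hLip
  refine ⟨y, ?_, ?_⟩
  · have hF := continuous_rhs (κ := κ) hy
    have hY : ∀ r, HasDerivAt (fun r => κ + ∫ s in (0 : ℝ)..r, rhs κ y s) (rhs κ y r) r :=
      fun r => (hF.integral_hasStrictDerivAt 0 r).hasDerivAt.const_add κ
    have hd : ∀ r, 0 < r → HasDerivAt y (rhs κ y r) r := fun r hr =>
      (hY r).congr_of_eventuallyEq (by
        filter_upwards [Ioi_mem_nhds hr] with s hs using hint s (le_of_lt hs))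
    have h0 : y 0 = κ := by simpa using hint 0 le_rfl
    have hle := le_of_deriv_nonpos hy h0 fun r hr => ⟨_, hd r hr, rhs_nonpos κ y hr.le⟩
    refine ⟨?_, h0, fun r hr => ?_⟩
    · have hC : ContDiff ℝ 1 (fun r => κ + ∫ s in (0 : ℝ)..r, rhs κ y s) := by
        rw [contDiff_one_iff_deriv]
        refine ⟨fun r => (hY r).differentiableAt, ?_⟩
        rw [funext fun r => (hY r).deriv]
        exact hF
      exact hC.contDiffOn.congr fun r hr => hint r hr
    · have hu := trunc_mass_bound hy hle hd hr.le
      refine ⟨?_, by rw [(hd r hr).deriv]; exact rhs_eq hle hr hu⟩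
      rw [div_le_iff₀ hr] at hu
      linarith
  · rintro z ⟨hzC, hz0, hz⟩ r hr
    -- The even extension of `z` is continuous on `ℝ` and has the same mass function on `[0,∞)`.
    set x : ℝ → ℝ := fun r => z |r| with hx
    have hxz : ∀ s, 0 ≤ s → x s = z s := fun s hs => by rw [hx]; simp [abs_of_nonneg hs]
    have hxc : Continuous x :=
      hzC.continuousOn.comp_continuous continuous_abs fun s => abs_nonneg s
    have hm : ∀ s, 0 ≤ s → mStar x s = mStar z s := by
      intro s hs
      rw [mStar_eq, mStar_eq, avg_congr hs fun t ht => by rw [hxz t ht.1]]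
    have hxd : ∀ s, 0 < s → HasDerivAt x (-(1 - 2 * mStar x s / s)⁻¹ *
        (mStar x s / s ^ 2 + 4 * Real.pi * s * (1 / 3 * Real.exp (4 * x s)))) s := by
      intro s hs
      have h1 : DifferentiableAt ℝ z s :=
        (hzC.differentiableOn (by norm_num)).differentiableAt (Ici_mem_nhds hs)
      rw [hm s hs.le, hxz s hs.le, ← (hz s hs).2]
      exact h1.hasDerivAt.congr_of_eventuallyEq (by
        filter_upwards [Ioi_mem_nhds hs] with t ht using hxz t (le_of_lt ht))
    have hlt : ∀ s, 0 < s → 2 * mStar x s < s := fun s hs => by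
      rw [hm s hs.le]; exact (hz s hs).1
    have hle : ∀ s, 0 ≤ s → x s ≤ κ := by
      refine le_of_deriv_nonpos hxc (by rw [hxz 0 le_rfl, hz0]) fun s hs => ⟨_, hxd s hs, ?_⟩
      have h1 : 0 < 1 - 2 * mStar x s / s := by
        rw [sub_pos, div_lt_one hs]; exact hlt s hs
      have h2 := mStar_nonneg x hs.le
      have := Real.pi_pos
      rw [neg_mul, neg_nonpos]
      positivity
    have hF : ∀ s, 0 < s → HasDerivAt x (rhs κ x s) s := by
      intro s hs
      have hb := mass_bound (R := s) hxc (fun t ht => ⟨hlt t ht.1, hxd t ht.1⟩) s ⟨hs.le, le_rfl⟩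
      rw [rhs_eq hle hs (by linarith)]
      exact hxd s hs
    have hxe : x = y := by
      apply huniq x hxc
      intro s
      rw [intervalIntegral.integral_eq_sub_of_hasDerivAt_of_le (abs_nonneg s) hxc.continuousOn
        (fun t ht => hF t ht.1) ((continuous_rhs hxc).intervalIntegrable _ _), hxz 0 le_rfl, hz0]
      simp [hx]
    rw [← hxe]
    exact hxz r hr
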